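/- (Converse bound for the strong converse exponent.) For any discrete memoryless channel W: X → Y on finite alphabets and any r ≥ 0: if α ∈ (0,1), then E_sc^{(α)}(W,r) ≥ max_{α≤β≤1} [α(1−β)/(β(1−α))](I_β(W) − r); and if α ∈ [1,∞], then E_sc^{(α)}(W,r) ≥ max{I_α(W) − r, 0}. -/

import Mathlib

open scoped ENNReal NNReal BigOperators Classical
open Filter

noncomputable section

namespace RST

/-- Base-2 logarithm `ℝ≥0∞ → EReal`, with `log 0 = ⊥` and `log ⊤ = ⊤`. -/
def elog2 (s : ℝ≥0∞) : EReal :=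
  if s = 0 then ⊥ else if s = ⊤ then ⊤ else ((Real.logb 2 s.toReal : ℝ) : EReal)

/-- Base-2 logarithm `EReal → EReal` (for nonnegative arguments). -/
def eLog2 (x : EReal) : EReal :=
  if x = ⊤ then ⊤ else if x ≤ 0 then ⊥ else ((Real.logb 2 x.toReal : ℝ) : EReal)

/-- Base-2 exponential `EReal → ℝ≥0∞`. -/
def epow2 (x : EReal) : ℝ≥0∞ :=
  if x = ⊤ then ⊤ else if x = ⊥ then 0 else ENNReal.ofReal ((2 : ℝ) ^ x.toReal)

variable {X Y : Type*}

/-- A probability distribution on a finite alphabet, as an `ℝ≥0∞`-valued function. -/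
def IsDist [Fintype X] (P : X → ℝ≥0∞) : Prop := ∑ x, P x = 1

/-- A discrete memoryless channel: every row is a probability distribution. -/
def IsChannel [Fintype X] [Fintype Y] (W : X → Y → ℝ≥0∞) : Prop := ∀ x, ∑ y, W x y = 1

/-- Order-`α` Rényi divergence (base 2), with the order `α ∈ [0,∞]` encoded as `ℝ≥0∞`.
The conventions `0/0 = 0` and `a/0 = ∞` (for `a > 0`, `α > 1`) are built into `ℝ≥0∞`
arithmetic.  The second argument is allowed to be an arbitrary nonnegative vector. -/
def renyiD [Fintype X] (α : ℝ≥0∞) (P Q : X → ℝ≥0∞) : EReal :=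
  if α = 0 then - elog2 (∑ x ∈ Finset.univ.filter fun x => P x ≠ 0, Q x)
  else if α = 1 then ∑ x, ((P x).toReal : EReal) * elog2 (P x / Q x)
  else if α = ⊤ then elog2 (⨆ x, P x / Q x)
  else (((α.toReal - 1)⁻¹ : ℝ) : EReal) *
    elog2 (∑ x, P x ^ α.toReal * Q x ^ (1 - α.toReal))

/-- The `X`-marginal of a joint distribution on `X × Y`. -/
def margX [Fintype X] [Fintype Y] (P : X × Y → ℝ≥0∞) : X → ℝ≥0∞ := fun x => ∑ y, P (x, y)

/-- Order-`α` Rényi mutual information `I_α(X:Y)_P = min_{Q_Y} D_α(P‖P_X × Q_Y)`. -/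
def renyiMI [Fintype X] [Fintype Y] (α : ℝ≥0∞) (P : X × Y → ℝ≥0∞) : EReal :=
  ⨅ Q : {Q : Y → ℝ≥0∞ // IsDist Q}, renyiD α P fun p => margX P p.1 * Q.1 p.2

/-- The joint input-output distribution `P_X · W`. -/
def joint [Fintype X] [Fintype Y] (PX : X → ℝ≥0∞) (W : X → Y → ℝ≥0∞) : X × Y → ℝ≥0∞ :=
  fun p => PX p.1 * W p.1 p.2

/-- Order-`α` Rényi capacity `I_α(W) = max_{P_X} I_α(X:Y)_{P_X · W}`. -/
def renyiCap [Fintype X] [Fintype Y] (α : ℝ≥0∞) (W : X → Y → ℝ≥0∞) : EReal :=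
  ⨆ P : {P : X → ℝ≥0∞ // IsDist P}, renyiMI α (joint P.1 W)

/-- `N` is a simulation of a channel `X → Y` with communication cost at most `c` bits:
shared randomness `K = Fin m` with distribution `PK`, a message set `{1,…,M}` with
`log₂ M ≤ c`, an encoder `E` and a decoder `D`. -/
def IsSimulation [Fintype X] [Fintype Y] (c : ℝ) (N : X → Y → ℝ≥0∞) : Prop :=
  ∃ (m M : ℕ) (PK : Fin m → ℝ≥0∞) (E : X → Fin m → Fin M → ℝ≥0∞)
    (D : Fin M → Fin m → Y → ℝ≥0∞),
    0 < M ∧ Real.logb 2 M ≤ c ∧ (∑ k, PK k = 1) ∧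
    (∀ x k, ∑ j, E x k j = 1) ∧ (∀ j k, ∑ y, D j k y = 1) ∧
    ∀ x y, N x y = ∑ k, ∑ j, PK k * E x k j * D j k y

/-- `D_α(W, N) := max_x D_α(W(·|x) ‖ N(·|x))`. -/
def chD [Fintype X] [Fintype Y] (α : ℝ≥0∞) (W N : X → Y → ℝ≥0∞) : EReal :=
  ⨆ x, renyiD α (W x) (N x)

/-- `𝖣_α(W, c) := min_{N ∈ A(W,c)} D_α(W, N)`. -/
def simD [Fintype X] [Fintype Y] (α : ℝ≥0∞) (W : X → Y → ℝ≥0∞) (c : ℝ) : EReal :=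
  ⨅ N : {N : X → Y → ℝ≥0∞ // IsSimulation c N}, chD α W N.1

/-- The `n`-fold memoryless extension `W^{×n}` of a channel `W`. -/
def prodCh [Fintype X] [Fintype Y] (n : ℕ) (W : X → Y → ℝ≥0∞) :
    (Fin n → X) → (Fin n → Y) → ℝ≥0∞ :=
  fun xs ys => ∏ i, W (xs i) (ys i)

/-- A sequence of communication costs with rate at most `r`. -/
def RateOK (r : ℝ) (c : ℕ → ℝ) : Prop :=
  (∀ n, 0 ≤ c n) ∧ Filter.limsup (fun n : ℕ => ((c n / n : ℝ) : EReal)) Filter.atTop ≤ (r : EReal)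

/-- Reliability function `E_rf^{(α)}(W, r)`. -/
def Erf [Fintype X] [Fintype Y] (α : ℝ≥0∞) (W : X → Y → ℝ≥0∞) (r : ℝ) : EReal :=
  ⨆ c : {c : ℕ → ℝ // RateOK r c},
    Filter.liminf
      (fun n : ℕ => (((-1 : ℝ) / n : ℝ) : EReal) * eLog2 (simD α (prodCh n W) (c.1 n)))
      Filter.atTop

/-- Strong converse exponent `E_sc^{(α)}(W, r)`. -/
def Esc [Fintype X] [Fintype Y] (α : ℝ≥0∞) (W : X → Y → ℝ≥0∞) (r : ℝ) : EReal :=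
  ⨅ c : {c : ℕ → ℝ // RateOK r c},
    Filter.limsup
      (fun n : ℕ => (((1 : ℝ) / n : ℝ) : EReal) * simD α (prodCh n W) (c.1 n))
      Filter.atTop

/-- The `α`-Rényi simulation rate `R_RST^{(α)}(W)`. -/
def Rrst [Fintype X] [Fintype Y] (α : ℝ≥0∞) (W : X → Y → ℝ≥0∞) : EReal :=
  ⨅ c : {c : ℕ → ℝ // (∀ n, 0 ≤ c n) ∧
      Filter.limsup (fun n : ℕ => simD α (prodCh n W) (c n)) Filter.atTop = 0},
    Filter.limsup (fun n : ℕ => ((c.1 n / n : ℝ) : EReal)) Filter.atTop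

/-- n-fold product of a joint distribution on `X × Y`, as a distribution on pairs of
sequences. -/
def prodJoint [Fintype X] [Fintype Y] (n : ℕ) (P : X × Y → ℝ≥0∞) :
    (Fin n → X) × (Fin n → Y) → ℝ≥0∞ :=
  fun p => ∏ i, P (p.1 i, p.2 i)

/-- n-fold product distribution. -/
def prodDist [Fintype X] (n : ℕ) (P : X → ℝ≥0∞) : (Fin n → X) → ℝ≥0∞ :=
  fun xs => ∏ i, P (xs i)

/-- The type (empirical count vector) of a sequence. -/
def seqType [Fintype Y] [DecidableEq Y] {n : ℕ} (ys : Fin n → Y) : Y → ℕ :=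
  fun y => (Finset.univ.filter fun i => ys i = y).card

/-- The cardinality of the type class of a sequence. -/
def typeClassCard [Fintype Y] [DecidableEq Y] {n : ℕ} (ys : Fin n → Y) : ℕ :=
  (Finset.univ.filter fun zs : Fin n → Y => seqType zs = seqType ys).card

/-- The number of types of sequences in `Y^n`. -/
def numTypes (Y : Type*) [Fintype Y] [DecidableEq Y] (n : ℕ) : ℕ :=
  (Finset.univ.image fun ys : Fin n → Y => seqType ys).card

/-- `Φ_{Y^n}`: the uniform mixture over type classes of `Y^n`. -/
def PhiY (Y : Type*) [Fintype Y] [DecidableEq Y] (n : ℕ) : (Fin n → Y) → ℝ≥0∞ :=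
  fun ys => ((numTypes Y n : ℝ≥0∞) * (typeClassCard ys : ℝ≥0∞))⁻¹

end RST

namespace RST



def e2 (t : ℝ) : ℝ≥0∞ := ENNReal.ofReal ((2 : ℝ) ^ t)

lemma e2_ne_zero (t : ℝ) : e2 t ≠ 0 := by
  unfold e2; simp; positivity
lemma e2_ne_top (t : ℝ) : e2 t ≠ ⊤ := by unfold e2; simp
lemma e2_toReal (t : ℝ) : (e2 t).toReal = (2 : ℝ) ^ t := by
  unfold e2; exact ENNReal.toReal_ofReal (by positivity)
lemma e2_add (s t : ℝ) : e2 (s + t) = e2 s * e2 t := by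
  unfold e2; rw [Real.rpow_add (by norm_num), ENNReal.ofReal_mul (by positivity)]
lemma e2_rpow (s t : ℝ) : (e2 s) ^ t = e2 (s * t) := by
  unfold e2
  rw [ENNReal.ofReal_rpow_of_pos (by positivity), Real.rpow_mul (by norm_num)]
lemma e2_le {s t : ℝ} (h : s ≤ t) : e2 s ≤ e2 t := by
  unfold e2
  exact ENNReal.ofReal_le_ofReal (Real.rpow_le_rpow_of_exponent_le (by norm_num) h)

lemma le_elog2 (t : ℝ) (s : ℝ≥0∞) : (t : EReal) ≤ elog2 s ↔ e2 t ≤ s := by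
  unfold elog2
  split_ifs with h1 h2
  · subst h1; simp [e2_ne_zero]
  · subst h2; simp
  · have hs : 0 < s.toReal := ENNReal.toReal_pos h1 h2
    rw [EReal.coe_le_coe_iff, Real.le_logb_iff_rpow_le (by norm_num) hs, ← e2_toReal,
      ENNReal.toReal_le_toReal (e2_ne_top t) h2]

lemma elog2_le (t : ℝ) (s : ℝ≥0∞) : elog2 s ≤ (t : EReal) ↔ s ≤ e2 t := by
  unfold elog2
  split_ifs with h1 h2
  · subst h1; simp
  · subst h2; simp [e2_ne_top]
  · have hs : 0 < s.toReal := ENNReal.toReal_pos h1 h2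
    rw [EReal.coe_le_coe_iff, Real.logb_le_iff_le_rpow (by norm_num) hs, ← e2_toReal,
      ENNReal.toReal_le_toReal h2 (e2_ne_top t)]

lemma le_mul_elog2_pos {a : ℝ} (ha : 0 < a) (t : ℝ) (s : ℝ≥0∞) :
    (t : EReal) ≤ ((a⁻¹ : ℝ) : EReal) * elog2 s ↔ e2 (a * t) ≤ s := by
  rw [← le_elog2]
  have ha' : 0 < a⁻¹ := inv_pos.mpr ha
  induction elog2 s with
  | bot => simp [EReal.coe_mul_bot_of_pos ha', -EReal.coe_mul]
  | top => simp [EReal.coe_mul_top_of_pos ha']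
  | coe u =>
    rw [← EReal.coe_mul, EReal.coe_le_coe_iff, EReal.coe_le_coe_iff, le_inv_mul_iff₀ ha]

lemma le_mul_elog2_neg {a : ℝ} (ha : a < 0) (t : ℝ) (s : ℝ≥0∞) :
    (t : EReal) ≤ ((a⁻¹ : ℝ) : EReal) * elog2 s ↔ s ≤ e2 (a * t) := by
  rw [← elog2_le]
  have ha' : a⁻¹ < 0 := inv_lt_zero.mpr ha
  induction elog2 s with
  | bot => simp [EReal.coe_mul_bot_of_neg ha']
  | top => simp [EReal.coe_mul_top_of_neg ha', -EReal.coe_mul]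
  | coe u =>
    rw [← EReal.coe_mul, EReal.coe_le_coe_iff, EReal.coe_le_coe_iff]
    constructor
    · intro h
      have := mul_le_mul_of_nonpos_left h ha.le
      rwa [← mul_assoc, mul_inv_cancel₀ ha.ne, one_mul] at this
    · intro h
      have := mul_le_mul_of_nonpos_left h ha'.le
      rwa [← mul_assoc, inv_mul_cancel₀ ha.ne, one_mul] at this

lemma renyiD_ofReal {X : Type*} [Fintype X] {a : ℝ} (h0 : 0 < a) (h1 : a ≠ 1)
    (P Q : X → ℝ≥0∞) : renyiD (ENNReal.ofReal a) P Q =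
      (((a - 1)⁻¹ : ℝ) : EReal) * elog2 (∑ x, P x ^ a * Q x ^ (1 - a)) := by
  unfold renyiD
  rw [if_neg (by simpa using h0), if_neg (by simpa using h1), if_neg (by simp),
    ENNReal.toReal_ofReal h0.le]

/-- Simulations are dominated by `2^c` times an output distribution. -/
lemma sim_dom {X Y : Type*} [Fintype X] [Fintype Y] {c : ℝ} {N : X → Y → ℝ≥0∞}
    (h : IsSimulation c N) : ∃ Q : Y → ℝ≥0∞, ∑ y, Q y = 1 ∧ (∀ x y, N x y ≤ e2 c * Q y) ∧
      ∀ x, ∑ y, N x y = 1 := by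
  obtain ⟨m, M, PK, E, D, hM, hMc, hPK, hE, hD, hN⟩ := h
  have hM0 : (M : ℝ≥0∞) ≠ 0 := by exact_mod_cast hM.ne'
  have hMt : (M : ℝ≥0∞) ≠ ⊤ := ENNReal.natCast_ne_top M
  have hMe : (M : ℝ≥0∞) ≤ e2 c := by
    have : (M : ℝ) ≤ (2 : ℝ) ^ c :=
      (Real.logb_le_iff_le_rpow (by norm_num) (by exact_mod_cast hM)).1 hMc
    unfold e2
    rw [← ENNReal.ofReal_natCast]
    exact ENNReal.ofReal_le_ofReal this
  refine ⟨fun y => (M : ℝ≥0∞)⁻¹ * ∑ k, ∑ j, PK k * D j k y, ?_, ?_, ?_⟩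
  · rw [← Finset.mul_sum, Finset.sum_comm]
    have : ∀ k, ∑ y, ∑ j, PK k * D j k y = PK k * M := by
      intro k
      rw [Finset.sum_comm]
      simp [← Finset.mul_sum, hD, mul_comm]
    simp_rw [this, ← Finset.sum_mul, hPK, one_mul]
    exact ENNReal.inv_mul_cancel hM0 hMt
  · intro x y
    calc N x y = ∑ k, ∑ j, PK k * E x k j * D j k y := hN x y
      _ ≤ ∑ k, ∑ j, PK k * D j k y := by
          refine Finset.sum_le_sum fun k _ => Finset.sum_le_sum fun j _ => ?_
          have : E x k j ≤ 1 := by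
            rw [← hE x k]
            exact Finset.single_le_sum (f := fun j => E x k j) (fun _ _ => zero_le)
              (Finset.mem_univ j)
          gcongr
          exact mul_le_of_le_one_right' this
      _ = M * ((M : ℝ≥0∞)⁻¹ * ∑ k, ∑ j, PK k * D j k y) := by
          rw [← mul_assoc, ENNReal.mul_inv_cancel hM0 hMt, one_mul]
      _ ≤ _ := by gcongr
  · intro x
    simp_rw [hN]
    rw [Finset.sum_comm]
    have : ∀ k, ∑ y, ∑ j, PK k * E x k j * D j k y = PK k := by
      intro k
      rw [Finset.sum_comm]
      simp_rw [← Finset.mul_sum, hD, mul_one, ← Finset.mul_sum, hE, mul_one]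
    simp_rw [this, hPK]

lemma prodCh_channel {X Y : Type*} [Fintype X] [Fintype Y] {W : X → Y → ℝ≥0∞}
    (hW : IsChannel W) (n : ℕ) : IsChannel (prodCh n W) := by
  intro xs
  unfold prodCh
  have := Finset.prod_univ_sum (fun _ : Fin n => (Finset.univ : Finset Y)) (fun i y => W (xs i) y)
  rw [Fintype.piFinset_univ] at this
  rw [← this]
  simp [hW _]

lemma sum_prodpi {n : ℕ} {Y : Type*} [Fintype Y] {R : Type*} [CommSemiring R] (f : Fin n → Y → R) :
    ∑ ys : Fin n → Y, ∏ i, f i (ys i) = ∏ i, ∑ y, f i y := by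
  have := Finset.prod_univ_sum (fun _ : Fin n => (Finset.univ : Finset Y)) f
  rw [Fintype.piFinset_univ] at this
  exact this.symm

lemma prodDist_isDist {X : Type*} [Fintype X] {P : X → ℝ≥0∞} (hP : IsDist P) (n : ℕ) :
    IsDist (prodDist n P) := by
  unfold IsDist prodDist at *
  rw [sum_prodpi (fun _ => P)]; simp [hP]

lemma exists_le_avg {X : Type*} [Fintype X] [Nonempty X] {P T : X → ℝ≥0∞} (hP : IsDist P) :
    ∃ x, T x ≤ ∑ x, P x * T x := by
  obtain ⟨x, hx⟩ := Finite.exists_min T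
  refine ⟨x, ?_⟩
  calc T x = ∑ x', P x' * T x := by rw [← Finset.sum_mul, hP, one_mul]
    _ ≤ _ := Finset.sum_le_sum fun i _ => by gcongr; exact hx i

lemma exists_ge_avg {X : Type*} [Fintype X] [Nonempty X] {P T : X → ℝ≥0∞} (hP : IsDist P) :
    ∃ x, ∑ x, P x * T x ≤ T x := by
  obtain ⟨x, hx⟩ := Finite.exists_max T
  refine ⟨x, ?_⟩
  calc ∑ x, P x * T x ≤ ∑ x', P x' * T x := Finset.sum_le_sum fun i _ => by gcongr; exact hx i
    _ = _ := by rw [← Finset.sum_mul, hP, one_mul]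

/-- Hölder, orders below one. -/
lemma holder_lt {Y : Type*} [Fintype Y] {b : ℝ} (h0 : 0 < b) (h1 : b < 1) (f g : Y → ℝ≥0∞) :
    ∑ y, f y ^ b * g y ^ (1 - b) ≤ (∑ y, f y) ^ b * (∑ y, g y) ^ (1 - b) := by
  have hpq : (b⁻¹).HolderConjugate ((1 - b)⁻¹) := by
    rw [Real.holderConjugate_iff]
    refine ⟨(one_lt_inv₀ h0).2 h1, by simp⟩
  have := ENNReal.inner_le_Lp_mul_Lq Finset.univ (fun y => f y ^ b) (fun y => g y ^ (1 - b)) hpq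
  have hb : b ≠ 0 := h0.ne'
  have hb1 : 1 - b ≠ 0 := by linarith
  simpa [← ENNReal.rpow_mul, hb, hb1] using this

/-- Reverse Hölder, orders above one. -/
lemma holder_gt {Y : Type*} [Fintype Y] {b : ℝ} (h1 : 1 < b) (f g : Y → ℝ≥0∞)
    (hg : ∑ y, g y = 1) :
    (∑ y, f y) ^ b ≤ ∑ y, f y ^ b * g y ^ (1 - b) := by
  have hb0 : 0 < b := by linarith
  by_cases hex : ∃ y, g y = 0 ∧ f y ≠ 0
  · obtain ⟨y, hy, hf⟩ := hex
    have : f y ^ b * g y ^ (1 - b) = ⊤ := by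
      rw [hy, ENNReal.zero_rpow_of_neg (by linarith)]
      exact ENNReal.mul_top (by simp [hf, hb0.le, hb0])
    have h2 := Finset.single_le_sum (f := fun y => f y ^ b * g y ^ (1 - b))
      (fun _ _ => zero_le) (Finset.mem_univ y)
    simp only [this] at h2
    rw [top_le_iff.1 h2]; exact le_top
  · push Not at hex
    have hgt : ∀ y, g y ≠ ⊤ := by
      intro y hy
      have h2 := Finset.single_le_sum (f := g) (fun _ _ => zero_le) (Finset.mem_univ y)
      rw [hg, hy] at h2; simp at h2
    have key := holder_lt (b := b⁻¹) (inv_pos.2 hb0) (inv_lt_one_of_one_lt₀ h1)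
      (fun y => f y ^ b * g y ^ (1 - b)) g
    have e : ∀ y, (f y ^ b * g y ^ (1 - b)) ^ b⁻¹ * g y ^ (1 - b⁻¹) = f y := by
      intro y
      by_cases hgy : g y = 0
      · have := hex y hgy
        simp [this, hb0, hgy, inv_pos.2 hb0]
      · rw [ENNReal.mul_rpow_of_nonneg _ _ (inv_pos.2 hb0).le, ← ENNReal.rpow_mul,
          mul_inv_cancel₀ hb0.ne', ENNReal.rpow_one, ← ENNReal.rpow_mul, mul_assoc,
          ← ENNReal.rpow_add _ _ hgy (hgt y)]
        have : (1 - b) * b⁻¹ + (1 - b⁻¹) = 0 := by field_simp; ring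
        rw [this]; simp
    simp only [e, hg, ENNReal.one_rpow, mul_one] at key
    calc (∑ y, f y) ^ b ≤ ((∑ y, f y ^ b * g y ^ (1 - b)) ^ b⁻¹) ^ b := by gcongr
      _ = _ := by rw [← ENNReal.rpow_mul, inv_mul_cancel₀ hb0.ne', ENNReal.rpow_one]

lemma dist_ne_top {X : Type*} [Fintype X] {P : X → ℝ≥0∞} (hP : ∑ x, P x = 1) (x : X) :
    P x ≠ ⊤ := by
  intro hy
  have h2 := Finset.single_le_sum (f := P) (fun _ _ => zero_le) (Finset.mem_univ x)
  rw [hP, hy] at h2; simp at h2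

lemma margX_joint {X Y : Type*} [Fintype X] [Fintype Y] {W : X → Y → ℝ≥0∞} (hW : IsChannel W)
    (P : X → ℝ≥0∞) (x : X) : margX (joint P W) x = P x := by
  unfold margX joint
  simp only
  rw [← Finset.mul_sum, hW x, mul_one]

lemma joint_term {p w q : ℝ≥0∞} (hp : p ≠ ⊤) (hq : q ≠ ⊤) {b : ℝ} (hb : 0 < b) :
    (p * w) ^ b * (p * q) ^ (1 - b) = p * w ^ b * q ^ (1 - b) := by
  by_cases h : p = 0
  · simp [h, hb]
  · rw [ENNReal.mul_rpow_of_nonneg _ _ hb.le, ENNReal.mul_rpow_of_ne_top hp hq]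
    have : p ^ b * p ^ (1 - b) = p := by
      rw [← ENNReal.rpow_add _ _ h hp]; simp
    calc p ^ b * w ^ b * (p ^ (1 - b) * q ^ (1 - b))
        = (p ^ b * p ^ (1 - b)) * w ^ b * q ^ (1 - b) := by ring
      _ = _ := by rw [this]

/-- The Sibson weights. -/
def sibA {X Y : Type*} [Fintype X] (b : ℝ) (P : X → ℝ≥0∞) (W : X → Y → ℝ≥0∞) (y : Y) : ℝ≥0∞ :=
  ∑ x, P x * W x y ^ b

def sibZ {X Y : Type*} [Fintype X] [Fintype Y] (b : ℝ) (P : X → ℝ≥0∞) (W : X → Y → ℝ≥0∞) : ℝ≥0∞ :=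
  ∑ y, sibA b P W y ^ b⁻¹

lemma joint_sum {X Y : Type*} [Fintype X] [Fintype Y] {W : X → Y → ℝ≥0∞} (hW : IsChannel W)
    {P : X → ℝ≥0∞} (hP : IsDist P) {Q : Y → ℝ≥0∞} (hQ : IsDist Q) {b : ℝ} (hb : 0 < b) :
    ∑ p : X × Y, joint P W p ^ b * (margX (joint P W) p.1 * Q p.2) ^ (1 - b)
      = ∑ y, sibA b P W y * Q y ^ (1 - b) := by
  rw [Fintype.sum_prod_type, Finset.sum_comm]
  refine Finset.sum_congr rfl fun y _ => ?_
  unfold sibA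
  rw [Finset.sum_mul]
  refine Finset.sum_congr rfl fun x _ => ?_
  rw [margX_joint hW]
  exact joint_term (dist_ne_top hP x) (dist_ne_top hQ y) hb

lemma sib_opt {X Y : Type*} [Fintype X] [Fintype Y] {W : X → Y → ℝ≥0∞} (hW : IsChannel W)
    {P : X → ℝ≥0∞} (hP : IsDist P) {b : ℝ} (hb : 0 < b) :
    ∃ Q : Y → ℝ≥0∞, IsDist Q ∧ ∑ y, sibA b P W y * Q y ^ (1 - b) = sibZ b P W ^ b := by
  have hbi : 0 < b⁻¹ := inv_pos.2 hb
  set z : Y → ℝ≥0∞ := fun y => sibA b P W y ^ b⁻¹ with hz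
  have hA : ∀ y, sibA b P W y = z y ^ b := by
    intro y
    rw [hz]; simp only
    rw [← ENNReal.rpow_mul, inv_mul_cancel₀ hb.ne', ENNReal.rpow_one]
  have hZ : sibZ b P W = ∑ y, z y := rfl
  have hzt : ∀ y, z y ≠ ⊤ := by
    intro y
    apply ENNReal.rpow_ne_top_of_nonneg hbi.le
    unfold sibA
    refine ENNReal.sum_ne_top.2 fun x _ => ENNReal.mul_ne_top (dist_ne_top hP x) ?_
    exact ENNReal.rpow_ne_top_of_nonneg hb.le (dist_ne_top (hW x) y)
  have hZt : ∑ y, z y ≠ ⊤ := ENNReal.sum_ne_top.2 fun y _ => hzt y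
  have hZ0 : ∑ y, z y ≠ 0 := by
    intro h
    rw [Finset.sum_eq_zero_iff] at h
    have hP' : ∑ x, P x = 1 := hP
    obtain ⟨x, -, hx⟩ := Finset.exists_ne_zero_of_sum_ne_zero (s := Finset.univ) (f := P)
      (by rw [hP']; simp)
    obtain ⟨y, -, hy⟩ := Finset.exists_ne_zero_of_sum_ne_zero (s := Finset.univ) (f := W x)
      (by rw [hW x]; simp)
    have h2 : sibA b P W y = 0 := by
      rw [hA, h y (Finset.mem_univ y), ENNReal.zero_rpow_of_pos hb]
    unfold sibA at h2
    rw [Finset.sum_eq_zero_iff] at h2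
    have := h2 x (Finset.mem_univ x)
    rw [mul_eq_zero, ENNReal.rpow_eq_zero_iff_of_pos hb] at this
    tauto
  refine ⟨fun y => z y * (∑ y, z y)⁻¹, ?_, ?_⟩
  · unfold IsDist
    rw [← Finset.sum_mul, ENNReal.mul_inv_cancel hZ0 hZt]
  · rw [hZ]
    have : ∀ y, sibA b P W y * (z y * (∑ y, z y)⁻¹) ^ (1 - b) = z y * (∑ y, z y) ^ (b - 1) := by
      intro y
      rw [hA]
      by_cases h : z y = 0
      · simp [h, hb]
      · rw [ENNReal.mul_rpow_of_ne_top (hzt y) (ENNReal.inv_ne_top.2 hZ0), ← mul_assoc,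
          ← ENNReal.rpow_add _ _ h (hzt y), ENNReal.inv_rpow, ← ENNReal.rpow_neg]
        simp
    simp only [this]
    rw [← Finset.sum_mul]
    nth_rewrite 1 [← ENNReal.rpow_one (∑ y, z y)]
    rw [← ENNReal.rpow_add _ _ hZ0 hZt]
    congr 1; ring

lemma sib_n {X Y : Type*} [Fintype X] [Fintype Y] {W : X → Y → ℝ≥0∞}
    {P : X → ℝ≥0∞} {b : ℝ} (hb : 0 < b) (n : ℕ) (Q : (Fin n → Y) → ℝ≥0∞) :
    ∑ xs, prodDist n P xs * ∑ ys, prodCh n W xs ys ^ b * Q ys ^ (1 - b)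
      = ∑ ys : Fin n → Y, (∏ i, sibA b P W (ys i) ^ b⁻¹) ^ b * Q ys ^ (1 - b) := by
  simp_rw [Finset.mul_sum]
  rw [Finset.sum_comm]
  refine Finset.sum_congr rfl fun ys _ => ?_
  simp_rw [← mul_assoc]
  rw [← Finset.sum_mul]
  congr 1
  rw [← ENNReal.prod_rpow_of_nonneg hb.le]
  simp_rw [← ENNReal.rpow_mul, inv_mul_cancel₀ hb.ne', ENNReal.rpow_one]
  unfold sibA
  rw [← sum_prodpi (fun i x => P x * W x (ys i) ^ b)]
  refine Finset.sum_congr rfl fun xs _ => ?_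
  unfold prodDist prodCh
  rw [← ENNReal.prod_rpow_of_nonneg hb.le, Finset.prod_mul_distrib]

lemma sum_sib_n {X Y : Type*} [Fintype X] [Fintype Y] {W : X → Y → ℝ≥0∞}
    {P : X → ℝ≥0∞} {b : ℝ} (n : ℕ) :
    ∑ ys : Fin n → Y, (∏ i, sibA b P W (ys i) ^ b⁻¹) = sibZ b P W ^ n := by
  rw [sum_prodpi (fun _ y => sibA b P W y ^ b⁻¹)]
  simp [sibZ]

lemma e2_pow (s : ℝ) (n : ℕ) : e2 s ^ n = e2 (s * n) := by
  rw [← ENNReal.rpow_natCast, e2_rpow]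

/-- Tensorised bound, order below one. -/
lemma key_lt {X Y : Type*} [Fintype X] [Fintype Y] [Nonempty X] {W : X → Y → ℝ≥0∞}
    (hW : IsChannel W) {P : X → ℝ≥0∞} (hP : IsDist P) {b : ℝ} (hb : 0 < b) (hb1 : b < 1)
    {t : ℝ} (ht : (t : EReal) ≤ renyiMI (ENNReal.ofReal b) (joint P W)) (n : ℕ)
    {Q : (Fin n → Y) → ℝ≥0∞} (hQ : ∑ ys, Q ys = 1) :
    ∃ xs, ∑ ys, prodCh n W xs ys ^ b * Q ys ^ (1 - b) ≤ e2 ((b - 1) * t * n) := by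
  obtain ⟨q, hq, hqZ⟩ := sib_opt hW hP hb
  have h1 := ht.trans (iInf_le _ ⟨q, hq⟩)
  simp only at h1
  rw [renyiD_ofReal hb hb1.ne, le_mul_elog2_neg (by linarith), joint_sum hW hP hq hb, hqZ] at h1
  obtain ⟨xs, hxs⟩ := exists_le_avg (T := fun xs => ∑ ys, prodCh n W xs ys ^ b * Q ys ^ (1 - b))
    (prodDist_isDist hP n)
  refine ⟨xs, hxs.trans ?_⟩
  rw [sib_n hb]
  refine (holder_lt hb hb1 _ _).trans ?_
  rw [hQ, sum_sib_n, ENNReal.one_rpow, mul_one, ← e2_pow, ← ENNReal.rpow_natCast,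
    ← ENNReal.rpow_mul, mul_comm, ENNReal.rpow_mul, ENNReal.rpow_natCast]
  gcongr

lemma key_gt {X Y : Type*} [Fintype X] [Fintype Y] [Nonempty X] {W : X → Y → ℝ≥0∞}
    (hW : IsChannel W) {P : X → ℝ≥0∞} (hP : IsDist P) {b : ℝ} (hb1 : 1 < b)
    {t : ℝ} (ht : (t : EReal) ≤ renyiMI (ENNReal.ofReal b) (joint P W)) (n : ℕ)
    {Q : (Fin n → Y) → ℝ≥0∞} (hQ : ∑ ys, Q ys = 1) :
    ∃ xs, e2 ((b - 1) * t * n) ≤ ∑ ys, prodCh n W xs ys ^ b * Q ys ^ (1 - b) := by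
  have hb : 0 < b := by linarith
  obtain ⟨q, hq, hqZ⟩ := sib_opt hW hP hb
  have h1 := ht.trans (iInf_le _ ⟨q, hq⟩)
  simp only at h1
  rw [renyiD_ofReal hb hb1.ne', le_mul_elog2_pos (by linarith), joint_sum hW hP hq hb, hqZ] at h1
  obtain ⟨xs, hxs⟩ := exists_ge_avg (T := fun xs => ∑ ys, prodCh n W xs ys ^ b * Q ys ^ (1 - b))
    (prodDist_isDist hP n)
  refine ⟨xs, le_trans ?_ hxs⟩
  rw [sib_n hb]
  refine le_trans ?_ (holder_gt hb1 _ _ hQ)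
  rw [sum_sib_n, ← e2_pow, ← ENNReal.rpow_natCast (sibZ b P W),
    ← ENNReal.rpow_mul, mul_comm (n : ℝ), ENNReal.rpow_mul, ENNReal.rpow_natCast]
  gcongr

/-- Case A. -/
lemma conv_lt {X Y : Type*} [Fintype X] [Fintype Y] [Nonempty X] {W : X → Y → ℝ≥0∞}
    (hW : IsChannel W) {P : X → ℝ≥0∞} (hP : IsDist P) {a b : ℝ} (ha : 0 < a) (hab : a ≤ b)
    (hb1 : b < 1)
    {t : ℝ} (ht : (t : EReal) ≤ renyiMI (ENNReal.ofReal b) (joint P W)) (n : ℕ) (c : ℝ) :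
    (((a * (1 - b)) / (b * (1 - a)) * (t * n - c) : ℝ) : EReal)
      ≤ simD (ENNReal.ofReal a) (prodCh n W) c := by
  have hb : 0 < b := by linarith
  refine le_iInf fun N => ?_
  obtain ⟨N, hN⟩ := N
  obtain ⟨Q, hQ, hNQ, hN1⟩ := sim_dom hN
  obtain ⟨xs, hxs⟩ := key_lt hW hP hb hb1 ht n hQ
  refine le_trans ?_ (le_iSup _ xs)
  rw [renyiD_ofReal ha (by linarith), le_mul_elog2_neg (by linarith)]
  have h1 : ∑ ys, prodCh n W xs ys ^ b * N xs ys ^ (1 - b) ≤ e2 ((1 - b) * (c - t * n)) := by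
    calc _ ≤ ∑ ys, prodCh n W xs ys ^ b * (e2 c * Q ys) ^ (1 - b) := by
            refine Finset.sum_le_sum fun ys _ => ?_
            have := hNQ xs ys
            have : 0 ≤ 1 - b := by linarith
            gcongr
      _ = e2 ((1 - b) * c) * ∑ ys, prodCh n W xs ys ^ b * Q ys ^ (1 - b) := by
            rw [Finset.mul_sum]
            refine Finset.sum_congr rfl fun ys _ => ?_
            rw [ENNReal.mul_rpow_of_nonneg _ _ (by linarith), e2_rpow, mul_comm c]
            ring
      _ ≤ e2 ((1 - b) * c) * e2 ((b - 1) * t * n) := by gcongr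
      _ = _ := by rw [← e2_add]; congr 1; ring
  have h2 : ∑ ys, prodCh n W xs ys ^ a * N xs ys ^ (1 - a)
      ≤ (∑ ys, prodCh n W xs ys ^ b * N xs ys ^ (1 - b)) ^ (a / b) := by
    rcases eq_or_lt_of_le hab with rfl | hlt
    · rw [div_self ha.ne', ENNReal.rpow_one]
    · have := holder_lt (b := a / b) (by positivity) ((div_lt_one hb).2 hlt)
        (fun ys => prodCh n W xs ys ^ b * N xs ys ^ (1 - b)) (N xs)
      rw [hN1, ENNReal.one_rpow, mul_one] at this
      refine le_trans (le_of_eq ?_) this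
      refine Finset.sum_congr rfl fun ys _ => ?_
      have hab' : 0 ≤ a / b := by positivity
      rw [ENNReal.mul_rpow_of_nonneg _ _ hab', ← ENNReal.rpow_mul, ← ENNReal.rpow_mul, mul_assoc,
        ← ENNReal.rpow_add_of_nonneg]
      · congr 2 <;> (field_simp; try ring)
      · apply mul_nonneg <;> linarith
      · linarith [((div_lt_one hb).2 hlt)]
  refine h2.trans ?_
  have hab' : 0 ≤ a / b := by positivity
  calc _ ≤ (e2 ((1 - b) * (c - t * n))) ^ (a / b) := by gcongr
    _ = _ := by
      rw [e2_rpow]; congr 1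
      have : 1 - a ≠ 0 := by linarith
      field_simp; ring

/-- Case B. -/
lemma conv_gt {X Y : Type*} [Fintype X] [Fintype Y] [Nonempty X] {W : X → Y → ℝ≥0∞}
    (hW : IsChannel W) {P : X → ℝ≥0∞} (hP : IsDist P) {b : ℝ} (hb1 : 1 < b)
    {t : ℝ} (ht : (t : EReal) ≤ renyiMI (ENNReal.ofReal b) (joint P W)) (n : ℕ) (c : ℝ) :
    ((t * n - c : ℝ) : EReal) ≤ simD (ENNReal.ofReal b) (prodCh n W) c := by
  have hb : 0 < b := by linarith
  refine le_iInf fun N => ?_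
  obtain ⟨N, hN⟩ := N
  obtain ⟨Q, hQ, hNQ, hN1⟩ := sim_dom hN
  obtain ⟨xs, hxs⟩ := key_gt hW hP hb1 ht n hQ
  refine le_trans ?_ (le_iSup _ xs)
  rw [renyiD_ofReal hb (by linarith), le_mul_elog2_pos (by linarith)]
  calc e2 ((b - 1) * (t * n - c)) = e2 ((1 - b) * c) * e2 ((b - 1) * t * n) := by
            rw [← e2_add]; congr 1; ring
    _ ≤ e2 ((1 - b) * c) * ∑ ys, prodCh n W xs ys ^ b * Q ys ^ (1 - b) := by gcongr
    _ = ∑ ys, prodCh n W xs ys ^ b * (e2 c * Q ys) ^ (1 - b) := by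
            rw [Finset.mul_sum]
            refine Finset.sum_congr rfl fun ys _ => ?_
            rw [ENNReal.mul_rpow_of_ne_top (e2_ne_top _) (dist_ne_top hQ ys), e2_rpow, mul_comm c]
            ring
    _ ≤ _ := by
            refine Finset.sum_le_sum fun ys _ => ?_
            refine mul_le_mul' le_rfl ?_
            have h := hNQ xs ys
            have e : 1 - b = -(b - 1) := by ring
            rw [e, ENNReal.rpow_neg, ENNReal.rpow_neg]
            have : 0 ≤ b - 1 := by linarith
            gcongr

/-- Nonnegativity, orders below one. -/
lemma nonneg_lt {X Y : Type*} [Fintype X] [Fintype Y] [Nonempty X] {W : X → Y → ℝ≥0∞}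
    (hW : IsChannel W) {a : ℝ} (ha : 0 < a) (ha1 : a < 1) (c : ℝ) :
    0 ≤ simD (ENNReal.ofReal a) W c := by
  refine le_iInf fun N => ?_
  obtain ⟨N, hN⟩ := N
  obtain ⟨Q, hQ, hNQ, hN1⟩ := sim_dom hN
  obtain ⟨x⟩ := ‹Nonempty X›
  refine le_trans ?_ (le_iSup _ x)
  rw [renyiD_ofReal ha (by linarith), ← EReal.coe_zero, le_mul_elog2_neg (by linarith)]
  refine (holder_lt ha ha1 _ _).trans ?_
  simp only [hN1, hW x]
  simp [e2]

lemma nonneg_gt {X Y : Type*} [Fintype X] [Fintype Y] [Nonempty X] {W : X → Y → ℝ≥0∞}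
    (hW : IsChannel W) {a : ℝ} (ha1 : 1 < a) (c : ℝ) :
    0 ≤ simD (ENNReal.ofReal a) W c := by
  refine le_iInf fun N => ?_
  obtain ⟨N, hN⟩ := N
  obtain ⟨Q, hQ, hNQ, hN1⟩ := sim_dom hN
  obtain ⟨x⟩ := ‹Nonempty X›
  refine le_trans ?_ (le_iSup _ x)
  rw [renyiD_ofReal (by linarith) (by linarith), ← EReal.coe_zero, le_mul_elog2_pos (by linarith)]
  refine le_trans ?_ (holder_gt ha1 _ _ (hN1 x))
  simp only [hW x]
  simp [e2]

lemma renyiD_top {X : Type*} [Fintype X] (P Q : X → ℝ≥0∞) :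
    renyiD ⊤ P Q = elog2 (⨆ x, P x / Q x) := by
  unfold renyiD; simp

lemma nonneg_top {X Y : Type*} [Fintype X] [Fintype Y] [Nonempty X] {W : X → Y → ℝ≥0∞}
    (hW : IsChannel W) (c : ℝ) :
    0 ≤ simD ⊤ W c := by
  refine le_iInf fun N => ?_
  obtain ⟨N, hN⟩ := N
  obtain ⟨Q, hQ, hNQ, hN1⟩ := sim_dom hN
  obtain ⟨x⟩ := ‹Nonempty X›
  refine le_trans ?_ (le_iSup _ x)
  rw [renyiD_top, ← EReal.coe_zero, le_elog2]
  set l := ⨆ y, W x y / N x y with hl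
  by_cases hlt : l = ⊤
  · rw [hlt]; exact le_top
  have h : ∀ y, W x y ≤ l * N x y := by
    intro y
    have : W x y / N x y ≤ l := le_iSup (fun y => W x y / N x y) y
    refine (ENNReal.div_le_iff_le_mul ?_ ?_).1 this
    · exact Or.inr hlt
    · exact Or.inl (dist_ne_top (hN1 x) y)
  have h2 : ∑ y, W x y ≤ ∑ y, l * N x y := Finset.sum_le_sum fun y _ => h y
  rw [← Finset.mul_sum, hN1, hW, mul_one] at h2
  simpa [e2] using h2

/-- Case C. -/
lemma conv_top {X Y : Type*} [Fintype X] [Fintype Y] [Nonempty X] {W : X → Y → ℝ≥0∞}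
    (hW : IsChannel W) {P : X → ℝ≥0∞}
    {t : ℝ} (ht : (t : EReal) ≤ renyiMI ⊤ (joint P W)) (n : ℕ) (c : ℝ) :
    ((t * n - c : ℝ) : EReal) ≤ simD ⊤ (prodCh n W) c := by
  set B : Y → ℝ≥0∞ := fun y => ⨆ x, W x y with hB
  have hBm : ∀ y, ∃ x, B y = W x y := by
    intro y
    obtain ⟨x, hx⟩ := Finite.exists_max (fun x => W x y)
    exact ⟨x, le_antisymm (iSup_le hx) (le_iSup (fun x => W x y) x)⟩
  choose g hg using hBm
  have hBt : ∀ y, B y ≠ ⊤ := fun y => by rw [hg]; exact dist_ne_top (hW _) y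
  have hZt : ∑ y, B y ≠ ⊤ := ENNReal.sum_ne_top.2 fun y _ => hBt y
  have hZ1 : 1 ≤ ∑ y, B y := by
    obtain ⟨x⟩ := ‹Nonempty X›
    rw [← hW x]
    exact Finset.sum_le_sum fun y _ => le_iSup (fun x => W x y) x
  have hZ0 : ∑ y, B y ≠ 0 := fun h => by rw [h] at hZ1; simp at hZ1
  have hq : IsDist (fun y => B y * (∑ y, B y)⁻¹) := by
    unfold IsDist
    rw [← Finset.sum_mul, ENNReal.mul_inv_cancel hZ0 hZt]
  have h1 := ht.trans (iInf_le _ ⟨_, hq⟩)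
  simp only at h1
  rw [renyiD_top, le_elog2] at h1
  have h2 : e2 t ≤ ∑ y, B y := by
    refine h1.trans (iSup_le fun p => ?_)
    rw [margX_joint hW]
    unfold joint
    apply ENNReal.div_le_of_le_mul
    calc P p.1 * W p.1 p.2 ≤ P p.1 * B p.2 := by
          gcongr; exact le_iSup (fun x => W x p.2) p.1
      _ = (∑ y, B y) * (∑ y, B y)⁻¹ * (P p.1 * B p.2) := by
          rw [ENNReal.mul_inv_cancel hZ0 hZt, one_mul]
      _ = _ := by ring
  refine le_iInf fun N => ?_
  obtain ⟨N, hN⟩ := N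
  obtain ⟨Q, hQ, hNQ, hN1⟩ := sim_dom hN
  obtain ⟨xs, hxs⟩ := Finite.exists_max (fun xs => ⨆ ys, prodCh n W xs ys / N xs ys)
  refine le_trans ?_ (le_iSup _ xs)
  rw [renyiD_top, le_elog2]
  set l := ⨆ ys, prodCh n W xs ys / N xs ys with hl
  by_cases hlt : l = ⊤
  · rw [hlt]; exact le_top
  have h : ∀ xs ys, prodCh n W xs ys ≤ l * N xs ys := by
    intro xs' ys
    have : prodCh n W xs' ys / N xs' ys ≤ l :=
      (le_iSup (fun y => prodCh n W xs' y / N xs' y) ys).trans (hxs xs')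
    refine (ENNReal.div_le_iff_le_mul ?_ ?_).1 this
    · exact Or.inr hlt
    · exact Or.inl (dist_ne_top (hN1 xs') ys)
  have h3 : (∑ y, B y) ^ n ≤ l * e2 c := by
    calc (∑ y, B y) ^ n = ∑ ys : Fin n → Y, ∏ i, B (ys i) := by
          rw [sum_prodpi (fun _ => B)]; simp
      _ ≤ ∑ ys : Fin n → Y, l * (e2 c * Q ys) := by
          refine Finset.sum_le_sum fun ys _ => ?_
          have := h (fun i => g (ys i)) ys
          unfold prodCh at this
          simp only [← hg] at this
          refine this.trans ?_
          gcongr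
          exact hNQ _ _
      _ = _ := by rw [← Finset.mul_sum, ← Finset.mul_sum, hQ, mul_one]
  calc e2 (t * n - c) = e2 t ^ n * e2 (-c) := by rw [e2_pow, ← e2_add]; rfl
    _ ≤ (l * e2 c) * e2 (-c) := by gcongr; exact (pow_le_pow_left' h2 n).trans h3
    _ = l := by rw [mul_assoc, ← e2_add]; simp [e2]

lemma renyiD_one {X : Type*} [Fintype X] (P Q : X → ℝ≥0∞) :
    renyiD 1 P Q = ∑ x, ((P x).toReal : EReal) * elog2 (P x / Q x) := by
  unfold renyiD; simp

lemma renyiD_one_real {X : Type*} [Fintype X] {P Q : X → ℝ≥0∞} (hP : ∀ x, P x ≠ ⊤)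
    (hQ : ∀ x, Q x ≠ ⊤) (hac : ∀ x, P x ≠ 0 → Q x ≠ 0) :
    renyiD 1 P Q = ((∑ x, (P x).toReal * Real.logb 2 ((P x).toReal / (Q x).toReal) : ℝ) : EReal) := by
  rw [renyiD_one]
  have : ∀ x, ((P x).toReal : EReal) * elog2 (P x / Q x)
      = (((P x).toReal * Real.logb 2 ((P x).toReal / (Q x).toReal) : ℝ) : EReal) := by
    intro x
    by_cases h : P x = 0
    · simp [h]
    · unfold elog2
      rw [if_neg (by simp [h, hQ x]), if_neg (ENNReal.div_ne_top (hP x) (hac x h)),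
        ENNReal.toReal_div, EReal.coe_mul]
  simp_rw [this]
  exact (map_sum (⟨⟨Real.toEReal, EReal.coe_zero⟩, EReal.coe_add⟩ : ℝ →+ EReal) _ _).symm

lemma renyiD_one_top {X : Type*} [Fintype X] {P Q : X → ℝ≥0∞} (hP : ∀ x, P x ≠ ⊤)
    (hQ : ∀ x, Q x ≠ ⊤) {x : X} (hx : P x ≠ 0) (hx' : Q x = 0) :
    renyiD 1 P Q = ⊤ := by
  rw [renyiD_one, ← Finset.add_sum_erase _ _ (Finset.mem_univ x)]
  have h1 : ((P x).toReal : EReal) * elog2 (P x / Q x) = ⊤ := by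
    rw [hx', ENNReal.div_zero hx]
    unfold elog2
    simp only [ENNReal.top_ne_zero, if_false, if_true]
    exact EReal.coe_mul_top_of_pos (ENNReal.toReal_pos hx (hP x))
  rw [h1]
  apply EReal.top_add_of_ne_bot
  refine Finset.sum_induction _ (fun z : EReal => z ≠ ⊥) ?_ ?_ ?_
  · intro a b ha hb
    simp [EReal.add_eq_bot_iff, ha, hb]
  · simp
  · intro y _
    by_cases h : P y = 0
    · simp [h]
    · unfold elog2
      rw [if_neg (by simp [h, hQ y])]
      split_ifs
      · rw [EReal.coe_mul_top_of_pos (ENNReal.toReal_pos h (hP y))]; simp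
      · rw [← EReal.coe_mul]; exact EReal.coe_ne_bot _

lemma gibbs_term {w v : ℝ} (hw : 0 < w) (hv : 0 < v) :
    (1 - v / w) / Real.log 2 ≤ Real.logb 2 (w / v) := by
  have h2 : 0 < Real.log 2 := Real.log_pos (by norm_num)
  unfold Real.logb
  gcongr
  have := Real.log_le_sub_one_of_pos (div_pos hv hw)
  rw [← inv_div v w, Real.log_inv]
  linarith

lemma toReal_sum_one {X : Type*} [Fintype X] {P : X → ℝ≥0∞} (hP : ∑ x, P x = 1) :
    ∑ x, (P x).toReal = 1 := by
  rw [← ENNReal.toReal_sum (fun x _ => dist_ne_top hP x), hP]; simp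

lemma nonneg_one {X Y : Type*} [Fintype X] [Fintype Y] [Nonempty X] {W : X → Y → ℝ≥0∞}
    (hW : IsChannel W) (c : ℝ) :
    0 ≤ simD 1 W c := by
  refine le_iInf fun N => ?_
  obtain ⟨N, hN⟩ := N
  obtain ⟨Q, hQ, hNQ, hN1⟩ := sim_dom hN
  obtain ⟨x⟩ := ‹Nonempty X›
  refine le_trans ?_ (le_iSup _ x)
  by_cases hac : ∀ y, W x y ≠ 0 → N x y ≠ 0
  · simp only
    rw [renyiD_one_real (dist_ne_top (hW x)) (dist_ne_top (hN1 x)) hac]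
    rw [← EReal.coe_zero, EReal.coe_le_coe_iff]
    have h2 : 0 < Real.log 2 := Real.log_pos (by norm_num)
    calc (0 : ℝ) = ∑ y, ((W x y).toReal - (N x y).toReal) / Real.log 2 := by
          rw [← Finset.sum_div, Finset.sum_sub_distrib, toReal_sum_one (hW x),
            toReal_sum_one (hN1 x)]
          simp
      _ ≤ _ := by
          refine Finset.sum_le_sum fun y _ => ?_
          by_cases h : W x y = 0
          · simp only [h, ENNReal.toReal_zero, zero_sub, zero_mul]
            apply div_nonpos_of_nonpos_of_nonneg _ h2.le
            simp
          · have hw := ENNReal.toReal_pos h (dist_ne_top (hW x) y)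
            have hv := ENNReal.toReal_pos (hac y h) (dist_ne_top (hN1 x) y)
            refine le_trans (le_of_eq ?_) (mul_le_mul_of_nonneg_left (gibbs_term hw hv) hw.le)
            field_simp
  · push Not at hac
    obtain ⟨y, hy, hy'⟩ := hac
    simp only
    rw [renyiD_one_top (dist_ne_top (hW x)) (dist_ne_top (hN1 x)) hy hy']
    exact le_top

lemma sum_prod_sum {X Y : Type*} [Fintype X] [Fintype Y] {n : ℕ} (j l : X → Y → ℝ)
    (hj : ∑ x, ∑ y, j x y = 1) :
    ∑ xs : Fin n → X, ∑ ys : Fin n → Y, (∏ i, j (xs i) (ys i)) * ∑ i, l (xs i) (ys i)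
      = n * ∑ x, ∑ y, j x y * l x y := by
  have key : ∀ i : Fin n, ∑ xs : Fin n → X, ∑ ys : Fin n → Y,
      (∏ i, j (xs i) (ys i)) * l (xs i) (ys i) = ∑ x, ∑ y, j x y * l x y := by
    intro i
    have e : ∀ (xs : Fin n → X) (ys : Fin n → Y), (∏ i, j (xs i) (ys i)) * l (xs i) (ys i)
        = ∏ k, (j (xs k) (ys k) * if k = i then l (xs k) (ys k) else 1) := by
      intro xs ys
      rw [Finset.prod_mul_distrib]; simp
    simp_rw [e]
    have e2 : ∀ xs : Fin n → X, ∑ ys : Fin n → Y,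
        ∏ k, (j (xs k) (ys k) * if k = i then l (xs k) (ys k) else 1)
        = ∏ k, ∑ y, (j (xs k) y * if k = i then l (xs k) y else 1) := by
      intro xs
      exact sum_prodpi (fun k y => (j (xs k) y * if k = i then l (xs k) y else 1))
    simp_rw [e2]
    rw [sum_prodpi (fun k x => ∑ y, (j x y * if k = i then l x y else 1))]
    rw [Finset.prod_eq_single i]
    · simp
    · intro k _ hk
      simp [hk, hj]
    · simp
  simp_rw [Finset.mul_sum]
  have : ∀ xs : Fin n → X, ∑ ys : Fin n → Y, ∑ i, (∏ i, j (xs i) (ys i)) * l (xs i) (ys i)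
      = ∑ i, ∑ ys : Fin n → Y, (∏ i, j (xs i) (ys i)) * l (xs i) (ys i) :=
    fun xs => Finset.sum_comm
  simp_rw [this]
  rw [Finset.sum_comm]
  simp_rw [key]
  simp [Finset.mul_sum]

lemma real_D {X Y : Type*} [Fintype X] [Fintype Y] {n : ℕ} {p : X → ℝ} {w : X → Y → ℝ}
    (hp : ∀ x, 0 ≤ p x) (hp1 : ∑ x, p x = 1) (hw : ∀ x y, 0 ≤ w x y) (hw1 : ∀ x, ∑ y, w x y = 1)
    {N : (Fin n → X) → (Fin n → Y) → ℝ} {Q : (Fin n → Y) → ℝ} {c : ℝ}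
    (hN : ∀ xs ys, 0 ≤ N xs ys) (hQ : ∀ ys, 0 ≤ Q ys) (hQ1 : ∑ ys, Q ys = 1)
    (hNQ : ∀ xs ys, N xs ys ≤ (2 : ℝ) ^ c * Q ys)
    (hac : ∀ xs ys, ∏ i, w (xs i) (ys i) ≠ 0 → N xs ys ≠ 0) :
    n * (∑ x, ∑ y, (p x * w x y) * Real.logb 2 (w x y / ∑ x', p x' * w x' y)) - c ≤
      ∑ xs : Fin n → X, (∏ i, p (xs i)) * ∑ ys : Fin n → Y, (∏ i, w (xs i) (ys i)) *
        Real.logb 2 ((∏ i, w (xs i) (ys i)) / N xs ys) := by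
  have hl2 : 0 < Real.log 2 := Real.log_pos (by norm_num)
  set py : Y → ℝ := fun y => ∑ x', p x' * w x' y with hpy
  have hj1 : ∑ x, ∑ y, p x * w x y = 1 := by
    simp_rw [← Finset.mul_sum, hw1, mul_one, hp1]
  have hpy0 : ∀ y, 0 ≤ py y := fun y => Finset.sum_nonneg fun x _ => mul_nonneg (hp x) (hw x y)
  set J : (Fin n → X) → (Fin n → Y) → ℝ := fun xs ys => ∏ i, (p (xs i) * w (xs i) (ys i)) with hJ
  have hJ0 : ∀ xs ys, 0 ≤ J xs ys := fun xs ys =>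
    Finset.prod_nonneg fun i _ => mul_nonneg (hp _) (hw _ _)
  set l : X → Y → ℝ := fun x y => Real.logb 2 (w x y / py y) with hl
  have hJsum : ∑ xs, ∑ ys, J xs ys = 1 := by
    have e2 : ∀ xs : Fin n → X, ∑ ys, J xs ys = ∏ k, ∑ y, (p (xs k) * w (xs k) y) :=
      fun xs => sum_prodpi (fun k y => p (xs k) * w (xs k) y)
    simp_rw [e2]
    rw [sum_prodpi (fun _ x => ∑ y, p x * w x y)]
    simp [hj1]
  have hJx : ∀ ys, ∑ xs, J xs ys = ∏ i, py (ys i) := by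
    intro ys
    exact sum_prodpi (fun k x => p x * w x (ys k))
  have hQsum : ∑ xs, ∑ ys, J xs ys * (Q ys / ∏ i, py (ys i)) ≤ 1 := by
    rw [Finset.sum_comm]
    simp_rw [← Finset.sum_mul, hJx]
    rw [← hQ1]
    refine Finset.sum_le_sum fun ys _ => ?_
    by_cases h : ∏ i, py (ys i) = 0
    · rw [h]; simpa using hQ ys
    · rw [mul_div_cancel₀ _ h]
  have hmain : ∀ xs ys, J xs ys * (∑ i, l (xs i) (ys i)) - c * J xs ys
      + (J xs ys - J xs ys * (Q ys / ∏ i, py (ys i))) / Real.log 2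
      ≤ (∏ i, p (xs i)) * ((∏ i, w (xs i) (ys i)) *
        Real.logb 2 ((∏ i, w (xs i) (ys i)) / N xs ys)) := by
    intro xs ys
    have hJe : J xs ys = (∏ i, p (xs i)) * ∏ i, w (xs i) (ys i) := Finset.prod_mul_distrib
    rw [← mul_assoc, ← hJe]
    by_cases hz : J xs ys = 0
    · simp [hz]
    · have hJpos : 0 < J xs ys := lt_of_le_of_ne (hJ0 xs ys) (Ne.symm hz)
      have hi : ∀ i, p (xs i) * w (xs i) (ys i) ≠ 0 := fun i =>
        (Finset.prod_ne_zero_iff.1 hz) i (Finset.mem_univ i)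
      have hwi : ∀ i, 0 < w (xs i) (ys i) := fun i =>
        lt_of_le_of_ne (hw _ _) (Ne.symm (right_ne_zero_of_mul (hi i)))
      have hpyi : ∀ i, 0 < py (ys i) := by
        intro i
        have h1 : 0 < p (xs i) * w (xs i) (ys i) :=
          lt_of_le_of_ne (mul_nonneg (hp _) (hw _ _)) (Ne.symm (hi i))
        exact h1.trans_le (Finset.single_le_sum (f := fun x => p x * w x (ys i))
          (fun x _ => mul_nonneg (hp _) (hw _ _)) (Finset.mem_univ _))
      have hwp : 0 < ∏ i, w (xs i) (ys i) := Finset.prod_pos fun i _ => hwi i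
      have hpp : 0 < ∏ i, py (ys i) := Finset.prod_pos fun i _ => hpyi i
      have hNp : 0 < N xs ys := lt_of_le_of_ne (hN xs ys) (Ne.symm (hac xs ys hwp.ne'))
      have h2c : (0 : ℝ) < 2 ^ c := by positivity
      have hQp : 0 < Q ys := by
        have := hNp.trans_le (hNQ xs ys)
        exact (pos_iff_pos_of_mul_pos this).1 h2c
      have hlog : (∑ i, l (xs i) (ys i)) - c + (1 - Q ys / ∏ i, py (ys i)) / Real.log 2
          ≤ Real.logb 2 ((∏ i, w (xs i) (ys i)) / N xs ys) := by
        have e1 : ∑ i, l (xs i) (ys i)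
            = Real.logb 2 (∏ i, w (xs i) (ys i)) - Real.logb 2 (∏ i, py (ys i)) := by
          rw [← Real.logb_div hwp.ne' hpp.ne', ← Finset.prod_div_distrib, Real.logb_prod]
          intro i _
          exact (div_pos (hwi i) (hpyi i)).ne'
        have e2 := gibbs_term hpp hQp
        rw [Real.logb_div hpp.ne' hQp.ne'] at e2
        rw [Real.logb_div hwp.ne' hNp.ne', e1]
        have e3 : Real.logb 2 (N xs ys) ≤ c + Real.logb 2 (Q ys) := by
          refine (Real.logb_le_logb_of_le (by norm_num) hNp (hNQ xs ys)).trans ?_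
          rw [Real.logb_mul h2c.ne' hQp.ne', Real.logb_rpow (by norm_num) (by norm_num)]
        linarith
      refine le_trans (le_of_eq ?_) (mul_le_mul_of_nonneg_left hlog (hJ0 xs ys))
      ring
  calc _ ≤ n * (∑ x, ∑ y, (p x * w x y) * l x y) - c * 1
        + (1 - ∑ xs, ∑ ys, J xs ys * (Q ys / ∏ i, py (ys i))) / Real.log 2 := by
          have : 0 ≤ (1 - ∑ xs, ∑ ys, J xs ys * (Q ys / ∏ i, py (ys i))) / Real.log 2 :=
            div_nonneg (by linarith) hl2.le
          linarith
    _ = ∑ xs, ∑ ys, (J xs ys * (∑ i, l (xs i) (ys i)) - c * J xs ys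
          + (J xs ys - J xs ys * (Q ys / ∏ i, py (ys i))) / Real.log 2) := by
          simp_rw [Finset.sum_add_distrib, ← Finset.sum_div, Finset.sum_sub_distrib,
            ← Finset.mul_sum]
          rw [hJsum]
          congr 3
          rw [← sum_prod_sum (fun x y => p x * w x y) l hj1]
    _ ≤ _ := by
          simp_rw [Finset.mul_sum]
          exact Finset.sum_le_sum fun xs _ => Finset.sum_le_sum fun ys _ => by
            simpa [Finset.mul_sum] using hmain xs ys

/-- Case D. -/
lemma conv_one {X Y : Type*} [Fintype X] [Fintype Y] [Nonempty X] {W : X → Y → ℝ≥0∞}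
    (hW : IsChannel W) {P : X → ℝ≥0∞} (hP : IsDist P)
    {t : ℝ} (ht : (t : EReal) ≤ renyiMI 1 (joint P W)) (n : ℕ) (c : ℝ) :
    ((t * n - c : ℝ) : EReal) ≤ simD 1 (prodCh n W) c := by
  have hPt := dist_ne_top hP
  have hWt : ∀ x y, W x y ≠ ⊤ := fun x => dist_ne_top (hW x)
  have hq : IsDist (fun y => ∑ x, P x * W x y) := by
    unfold IsDist
    rw [Finset.sum_comm]
    simp_rw [← Finset.mul_sum, hW _, mul_one]
    exact hP
  have h1 := ht.trans (iInf_le _ ⟨_, hq⟩)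
  simp only at h1
  have hqt := dist_ne_top hq
  rw [renyiD_one_real] at h1
  rotate_left
  · intro x; exact ENNReal.mul_ne_top (hPt _) (hWt _ _)
  · intro x; rw [margX_joint hW]; exact ENNReal.mul_ne_top (hPt _) (hqt _)
  · intro x hx h
    rw [margX_joint hW] at h
    unfold joint at hx
    rcases mul_eq_zero.1 h with h | h
    · simp [h] at hx
    · rw [Finset.sum_eq_zero_iff] at h
      exact hx (h x.1 (Finset.mem_univ _))
  rw [EReal.coe_le_coe_iff] at h1
  have h2 : t ≤ ∑ x, ∑ y, ((P x).toReal * (W x y).toReal) *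
      Real.logb 2 ((W x y).toReal / ∑ x', (P x').toReal * (W x' y).toReal) := by
    refine h1.trans (le_of_eq ?_)
    rw [Fintype.sum_prod_type]
    refine Finset.sum_congr rfl fun x _ => Finset.sum_congr rfl fun y _ => ?_
    rw [margX_joint hW]
    unfold joint
    simp only [ENNReal.toReal_mul]
    by_cases hx : (P x).toReal = 0
    · simp [hx]
    · rw [mul_div_mul_left _ _ hx, ENNReal.toReal_sum (fun x _ => ENNReal.mul_ne_top (hPt x) (hWt x y))]
      simp only [ENNReal.toReal_mul]
  refine le_iInf fun N => ?_
  obtain ⟨N, hN⟩ := N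
  obtain ⟨Q, hQ, hNQ, hN1⟩ := sim_dom hN
  have hWn := prodCh_channel hW n
  by_cases hac : ∀ xs ys, prodCh n W xs ys ≠ 0 → N xs ys ≠ 0
  · have hprod : ∀ xs ys, (prodCh n W xs ys).toReal = ∏ i, (W (xs i) (ys i)).toReal := by
      intro xs ys; unfold prodCh; rw [ENNReal.toReal_prod]
    have h3 := real_D (n := n) (p := fun x => (P x).toReal) (w := fun x y => (W x y).toReal)
      (N := fun xs ys => (N xs ys).toReal) (Q := fun ys => (Q ys).toReal) (c := c)
      (fun _ => ENNReal.toReal_nonneg) (toReal_sum_one hP) (fun _ _ => ENNReal.toReal_nonneg)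
      (fun x => toReal_sum_one (hW x)) (fun _ _ => ENNReal.toReal_nonneg)
      (fun _ => ENNReal.toReal_nonneg) (toReal_sum_one hQ)
      (by
        intro xs ys
        have := ENNReal.toReal_mono (ENNReal.mul_ne_top (e2_ne_top c) (dist_ne_top hQ ys))
          (hNQ xs ys)
        rwa [ENNReal.toReal_mul, e2_toReal] at this)
      (by
        intro xs ys h
        rw [← hprod] at h
        have : prodCh n W xs ys ≠ 0 := fun h' => h (by simp [h'])
        exact (ENNReal.toReal_pos (hac xs ys this) (dist_ne_top (hN1 xs) ys)).ne')
    simp only [← hprod] at h3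
    obtain ⟨xs, hxs⟩ := Finite.exists_max (fun xs : Fin n → X => ∑ ys, (prodCh n W xs ys).toReal *
        Real.logb 2 ((prodCh n W xs ys).toReal / (N xs ys).toReal))
    refine le_trans ?_ (le_iSup _ xs)
    simp only
    rw [renyiD_one_real (dist_ne_top (hWn xs)) (dist_ne_top (hN1 xs)) (hac xs),
      EReal.coe_le_coe_iff]
    have h4 : t * n - c ≤ _ := le_trans (by
      rw [mul_comm]
      gcongr) h3
    refine h4.trans ?_
    refine (Finset.sum_le_sum (fun xs' _ => mul_le_mul_of_nonneg_left (hxs xs')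
      (Finset.prod_nonneg fun i _ => ENNReal.toReal_nonneg))).trans ?_
    rw [← Finset.sum_mul, sum_prodpi (fun _ x => (P x).toReal)]
    simp [toReal_sum_one hP]
  · push Not at hac
    obtain ⟨xs, ys, h, h'⟩ := hac
    refine le_trans ?_ (le_iSup _ xs)
    simp only
    rw [renyiD_one_top (dist_ne_top (hWn xs)) (dist_ne_top (hN1 xs)) h h']
    exact le_top

lemma Esc_nonneg {X Y : Type*} [Fintype X] [Fintype Y] {W : X → Y → ℝ≥0∞} {α : ℝ≥0∞} {r : ℝ}
    (h0 : ∀ n c, 0 ≤ simD α (prodCh n W) c) : 0 ≤ Esc α W r := by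
  refine le_iInf fun c => ?_
  refine Filter.le_limsup_of_frequently_le' (Filter.Eventually.frequently ?_)
  refine Filter.Eventually.of_forall fun n => ?_
  refine EReal.mul_nonneg ?_ (h0 n _)
  exact_mod_cast (by positivity : (0 : ℝ) ≤ 1 / n)

lemma Esc_ge {X Y : Type*} [Fintype X] [Fintype Y] {W : X → Y → ℝ≥0∞} {α : ℝ≥0∞} {r k t : ℝ}
    (hk : 0 ≤ k) (h : ∀ (n : ℕ) (c : ℝ), ((k * (t * n - c) : ℝ) : EReal) ≤ simD α (prodCh n W) c)
    {ε : ℝ} (hε : 0 < ε) : ((k * (t - (r + ε)) : ℝ) : EReal) ≤ Esc α W r := by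
  refine le_iInf fun c => ?_
  refine Filter.le_limsup_of_frequently_le' (Filter.Eventually.frequently ?_)
  obtain ⟨c, hc0, hc⟩ := c
  have h1 : ∀ᶠ n : ℕ in atTop, ((c n / n : ℝ) : EReal) < ((r + ε : ℝ) : EReal) := by
    refine Filter.eventually_lt_of_limsup_lt (lt_of_le_of_lt hc ?_)
    exact_mod_cast (by linarith)
  filter_upwards [h1, Filter.eventually_gt_atTop 0] with n hn hn0
  rw [EReal.coe_lt_coe_iff] at hn
  have hnp : (0 : ℝ) < n := by exact_mod_cast hn0
  calc ((k * (t - (r + ε)) : ℝ) : EReal) ≤ ((1 / n * (k * (t * n - c n)) : ℝ) : EReal) := by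
        rw [EReal.coe_le_coe_iff]
        have : 1 / n * (k * (t * n - c n)) = k * (t - c n / n) := by field_simp
        rw [this]
        gcongr
    _ = ((1 / n : ℝ) : EReal) * ((k * (t * n - c n) : ℝ) : EReal) := EReal.coe_mul _ _
    _ ≤ _ := by
        refine mul_le_mul_of_nonneg_left (h n (c n)) ?_
        exact_mod_cast (by positivity : (0 : ℝ) ≤ 1 / n)

lemma finish {X Y : Type*} [Fintype X] [Fintype Y] {W : X → Y → ℝ≥0∞} {α β : ℝ≥0∞} {r k : ℝ}
    (hk : 0 < k) (h : ∀ (P : X → ℝ≥0∞), IsDist P → ∀ t : ℝ, (t : EReal) ≤ renyiMI β (joint P W) →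
      ∀ (n : ℕ) (c : ℝ), ((k * (t * n - c) : ℝ) : EReal) ≤ simD α (prodCh n W) c) :
    (k : EReal) * (renyiCap β W - (r : EReal)) ≤ Esc α W r := by
  have h' : ∀ t : ℝ, (t : EReal) < renyiCap β W → ((k * (t - r) : ℝ) : EReal) ≤ Esc α W r := by
    intro t ht
    obtain ⟨⟨P, hP⟩, hPt⟩ := lt_iSup_iff.1 ht
    have h1 := fun ε hε => Esc_ge (r := r) (ε := ε) hk.le (h P hP t hPt.le) hε
    induction he : Esc α W r with
    | bot =>
      have := h1 1 one_pos
      rw [he] at this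
      simp only [le_bot_iff] at this
      exact absurd this (EReal.coe_ne_bot _)
    | top => exact le_top
    | coe e =>
      rw [he] at h1
      simp only [EReal.coe_le_coe_iff] at h1 ⊢
      refine le_of_forall_pos_le_add fun δ hδ => ?_
      have := h1 (δ / k) (by positivity)
      have e1 : k * (t - (r + δ / k)) = k * (t - r) - δ := by field_simp; ring
      linarith
  induction hc : renyiCap β W with
  | bot => rw [EReal.bot_sub, EReal.coe_mul_bot_of_pos hk]; exact bot_le
  | top =>
    rw [hc] at h'
    refine le_of_eq_of_le (b := ⊤) ?_ ?_
    · rw [EReal.top_sub_coe, EReal.coe_mul_top_of_pos hk]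
    · rw [top_le_iff, EReal.eq_top_iff_forall_lt]
      intro y
      refine lt_of_lt_of_le ?_ (h' ((y + 1) / k + r) (EReal.coe_lt_top _))
      rw [EReal.coe_lt_coe_iff]
      have : k * ((y + 1) / k + r - r) = y + 1 := by field_simp; ring
      linarith
  | coe u =>
    rw [hc] at h'
    rw [← EReal.coe_sub, ← EReal.coe_mul]
    refine EReal.le_of_forall_lt_iff_le.1 fun z hz => ?_
    by_contra hcon
    have hzu : (z : EReal) < ((k * (u - r) : ℝ) : EReal) := not_le.1 hcon
    rw [EReal.coe_lt_coe_iff] at hzu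
    have := h' (z / k + r) (by
      rw [EReal.coe_lt_coe_iff]
      have : z / k < u - r := by rw [div_lt_iff₀ hk]; linarith
      linarith)
    have e : k * (z / k + r - r) = z := by field_simp; ring
    rw [e] at this
    exact absurd hz (not_lt.2 this)

/-- **Converse bound for the strong converse exponent** (Theorem 17).
For any channel `W` and `r ≥ 0`:
`E_sc^{(α)}(W,r) ≥ max_{α ≤ β ≤ 1} (α(1-β))/(β(1-α)) (I_β(W) - r)` for `α ∈ (0,1)`,
and `E_sc^{(α)}(W,r) ≥ |I_α(W) - r|⁺` for `α ∈ [1,∞]`. -/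
theorem strong_converse_exponent_converse
    {X Y : Type*} [Fintype X] [Fintype Y] [Nonempty X] [Nonempty Y]
    (W : X → Y → ℝ≥0∞) (hW : IsChannel W) (r : ℝ) (hr : 0 ≤ r) :
    (∀ α : ℝ, 0 < α → α < 1 →
      (⨆ β : {β : ℝ // α ≤ β ∧ β ≤ 1},
          (((α * (1 - β.1)) / (β.1 * (1 - α)) : ℝ) : EReal) *
            (renyiCap (ENNReal.ofReal β.1) W - (r : EReal))) ≤
        Esc (ENNReal.ofReal α) W r) ∧
    (∀ α : ℝ≥0∞, 1 ≤ α →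
      max (renyiCap α W - (r : EReal)) 0 ≤ Esc α W r) := by
  refine ⟨?_, ?_⟩
  · intro a ha ha1
    refine iSup_le fun β => ?_
    obtain ⟨b, hab, hb1⟩ := β
    simp only
    rcases eq_or_lt_of_le hb1 with rfl | hlt
    · simp only [sub_self, mul_zero, zero_div, EReal.coe_zero, zero_mul]
      exact Esc_nonneg fun n c => nonneg_lt (prodCh_channel hW n) ha ha1 c
    · refine finish ?_ fun P hP t ht n c => conv_lt hW hP ha hab hlt ht n c
      have h1 : 0 < 1 - a := by linarith
      have h2 : 0 < 1 - b := by linarith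
      have h3 : 0 < b := by linarith
      positivity
  · intro α hα
    have main : (∀ n c, 0 ≤ simD α (prodCh n W) c) ∧
        ∀ (P : X → ℝ≥0∞), IsDist P → ∀ t : ℝ, (t : EReal) ≤ renyiMI α (joint P W) →
          ∀ (n : ℕ) (c : ℝ), ((t * n - c : ℝ) : EReal) ≤ simD α (prodCh n W) c := by
      rcases eq_or_lt_of_le hα with rfl | hlt
      · exact ⟨fun n c => nonneg_one (prodCh_channel hW n) c,
          fun P hP t ht n c => conv_one hW hP ht n c⟩
      · by_cases htop : α = ⊤
        · subst htop
          exact ⟨fun n c => nonneg_top (prodCh_channel hW n) c,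
            fun P _ t ht n c => conv_top hW ht n c⟩
        · obtain ⟨b, hb, rfl⟩ : ∃ b : ℝ, 1 < b ∧ α = ENNReal.ofReal b := by
            refine ⟨α.toReal, ?_, (ENNReal.ofReal_toReal htop).symm⟩
            have := (ENNReal.toReal_lt_toReal ENNReal.one_ne_top htop).2 hlt
            simpa using this
          exact ⟨fun n c => nonneg_gt (prodCh_channel hW n) hb c,
            fun P hP t ht n c => conv_gt hW hP hb ht n c⟩
    refine max_le ?_ (Esc_nonneg main.1)
    have := finish (r := r) (k := 1) one_pos fun P hP t ht n c => by
      simpa only [one_mul] using main.2 P hP t ht n c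
    simpa using this

end RST
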